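/- arXiv:1706.10174 — 3 statements merged into one kernel-verified Lean document; each statement's English description precedes it below -/
import Mathlib

section
/- Let n ∈ ℝ² with 0 < ‖n‖ ≤ 1 and set D(n) = ((1 − χ(‖n‖))/2)·I₂ + ((3χ(‖n‖) − 1)/2)·(nnᵀ/‖n‖²). Then D(n) is positive semidefinite, i.e. vᵀ D(n) v ≥ 0 for all v ∈ ℝ². -/
open scoped Matrix

/-- The Eddington factor of the M₁ model. -/
noncomputable def eddingtonChi (f : ℝ) : ℝ :=
  (3 + 4 * f ^ 2) / (5 + 2 * Real.sqrt (4 - 3 * f ^ 2))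

/-- The Eddington tensor `D(n) = ((1 − χ(‖n‖))/2)·I₂ + ((3χ(‖n‖) − 1)/2)·(nnᵀ/‖n‖²)`. -/
noncomputable def eddingtonD (n : EuclideanSpace ℝ (Fin 2)) : Matrix (Fin 2) (Fin 2) ℝ :=
  ((1 - eddingtonChi ‖n‖) / 2) • (1 : Matrix (Fin 2) (Fin 2) ℝ) +
    ((3 * eddingtonChi ‖n‖ - 1) / 2) • Matrix.of fun i j => n i * n j / ‖n‖ ^ 2

theorem one_third_le_eddingtonChi (f : ℝ) : 1 / 3 ≤ eddingtonChi f := by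
  have sqrt_le_two : √(4 - 3 * f ^ 2) ≤ 2 :=
    Real.sqrt_le_iff.mpr ⟨zero_le_two, by linarith [sq_nonneg f]⟩
  calc
    (1 / 3 : ℝ) = (3 + 4 * 0) / (5 + 2 * 2) := by norm_num
    _ ≤ eddingtonChi f := by
      unfold eddingtonChi
      gcongr
      exact sq_nonneg f

theorem eddingtonChi_le_one {f : ℝ} (hf : |f| ≤ 1) : eddingtonChi f ≤ 1 := by
  have sq_le_one : f ^ 2 ≤ 1 := (sq_le_one_iff_abs_le_one f).mpr hf
  have one_le_sqrt : 1 ≤ √(4 - 3 * f ^ 2) := Real.one_le_sqrt.mpr (by linarith)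
  calc
    eddingtonChi f ≤ (3 + 4 * 1) / (5 + 2 * 1) := by
      unfold eddingtonChi
      gcongr
    _ = 1 := by norm_num

theorem posSemidef_smul_one_add_smul_vecMulVec_self_star {ι R : Type*} [Finite ι] [DecidableEq ι]
    [CommRing R] [PartialOrder R] [StarRing R] [StarOrderedRing R] {a b : R}
    (ha : 0 ≤ a) (hb : 0 ≤ b) (u : ι → R) :
    (a • (1 : Matrix ι ι R) + b • Matrix.vecMulVec u (star u)).PosSemidef :=
  (Matrix.PosSemidef.one.smul ha).add ((Matrix.posSemidef_vecMulVec_self_star u).smul hb)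

theorem eddingtonD_eq_smul_one_add_smul_vecMulVec (n : EuclideanSpace ℝ (Fin 2)) :
    eddingtonD n = ((1 - eddingtonChi ‖n‖) / 2) • (1 : Matrix (Fin 2) (Fin 2) ℝ) +
      ((3 * eddingtonChi ‖n‖ - 1) / 2 / ‖n‖ ^ 2) • Matrix.vecMulVec n n := by
  ext i j
  simp only [eddingtonD, Matrix.add_apply, Matrix.smul_apply, Matrix.of_apply,
    Matrix.vecMulVec_apply, smul_eq_mul]
  ring

/-- For `0 < ‖n‖ ≤ 1`, the Eddington tensor `D(n)` is positive semidefinite: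
`vᵀ D(n) v ≥ 0` for all `v ∈ ℝ²`. -/
theorem eddingtonD_posSemidef (n : EuclideanSpace ℝ (Fin 2))
    (h0 : 0 < ‖n‖) (h1 : ‖n‖ ≤ 1) :
    ∀ v : Fin 2 → ℝ, 0 ≤ v ⬝ᵥ (eddingtonD n).mulVec v := by
  have isotropic_nonneg : 0 ≤ (1 - eddingtonChi ‖n‖) / 2 := by
    have chi_le_one : eddingtonChi ‖n‖ ≤ 1 := eddingtonChi_le_one ((abs_norm n).trans_le h1)
    linarith
  have directional_nonneg : 0 ≤ (3 * eddingtonChi ‖n‖ - 1) / 2 / ‖n‖ ^ 2 :=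
    div_nonneg (by linarith [one_third_le_eddingtonChi ‖n‖]) (sq_nonneg _)
  have posSemidef : (eddingtonD n).PosSemidef := by
    rw [eddingtonD_eq_smul_one_add_smul_vecMulVec]
    exact posSemidef_smul_one_add_smul_vecMulVec_self_star isotropic_nonneg directional_nonneg n
  exact posSemidef.dotProduct_mulVec_nonneg
end

section
/- Let L ∈ ℕ, let w̃_γ ≥ 0 for γ = 1,…,L, let (w¹, w², w³) = (5/18, 8/18, 5/18), ŵ¹ = 1/6, let n₁, n₂, n₃ ∈ ℝ³ be unit vectors, l₁, l₂, l₃ > 0, |K| > 0, and Δt > 0 satisfy the CFL condition (2/3)ŵ¹ − Δt l_i/(2|K|) ≥ 0 for i = 1, 2, 3. Let μ_γ (γ = 1,…,L), μ_{i,β} and ν_{i,β} (i = 1,2,3, β = 1,2,3) be finite nonnegative Borel measures on S². For a finite nonnegative measure μ write m(μ) = (μ(S²), ∫_{S²} Ω dμ) ∈ ℝ × ℝ³ and, for a unit vector n, m⁻_n(μ) = (∫_{S²}(1 − n·Ω) dμ, ∫_{S²}(1 − n·Ω) Ω dμ). Then the updated cell average Ū = Σ_{γ=1}^{L} w̃_γ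 m(μ_γ) + Σ_{i=1}^{3} Σ_{β=1}^{3} w^β [ ((2/3)ŵ¹ − Δt l_i/(2|K|)) m(μ_{i,β}) + (Δt l_i/(2|K|)) m⁻_{n_i}(ν_{i,β}) ] is realizable: its first component is ≥ the Euclidean norm of its ℝ³ component. -/
open MeasureTheory
open scoped InnerProductSpace

/-- The moment pair `(μ(S²), ∫ Ω dμ)` of a measure on the unit sphere `S² ⊂ ℝ³`. -/
noncomputable def mom
    (μ : Measure (Metric.sphere (0 : EuclideanSpace ℝ (Fin 3)) 1)) :
    ℝ × EuclideanSpace ℝ (Fin 3) :=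
  ((μ Set.univ).toReal, ∫ Ω, (Ω : EuclideanSpace ℝ (Fin 3)) ∂μ)

/-- The moment pair `(∫ (1 − n·Ω) dμ, ∫ (1 − n·Ω) Ω dμ)` of a measure on the unit sphere,
weighted by the nonnegative density `Ω ↦ 1 − n·Ω` for a unit vector `n`. -/
noncomputable def momMinus (n : EuclideanSpace ℝ (Fin 3))
    (μ : Measure (Metric.sphere (0 : EuclideanSpace ℝ (Fin 3)) 1)) :
    ℝ × EuclideanSpace ℝ (Fin 3) :=
  (∫ Ω, (1 - ⟪n, (Ω : EuclideanSpace ℝ (Fin 3))⟫_ℝ) ∂μ,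
   ∫ Ω, (1 - ⟪n, (Ω : EuclideanSpace ℝ (Fin 3))⟫_ℝ) • (Ω : EuclideanSpace ℝ (Fin 3)) ∂μ)

/-!
The realizable pairs form a convex cone. Since `1 - n·Ω ≥ 0` on the sphere, the upwind moments
`m⁻_n(ν)` are the moments of the nonnegative measure `(1 - n·Ω) ν`, so the updated cell average is
a combination of realizable pairs, with coefficients that the CFL condition makes nonnegative.
-/

/-- The cone of realizable moment pairs `(p, q)`, those with `0 ≤ p` and `‖q‖ ≤ p`, in a normed
space of any dimension. Only `‖q‖ ≤ p` is recorded, as it forces `0 ≤ p`. Bundling it as a pointed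
cone makes nonnegative combinations of realizable pairs realizable by `Submodule` lemmas. -/
def realizableCone (E : Type*) [NormedAddCommGroup E] [NormedSpace ℝ E] :
    PointedCone ℝ (ℝ × E) where
  carrier := {p | ‖p.2‖ ≤ p.1}
  zero_mem' := by simp
  add_mem' hp hq := norm_add_le_of_le hp hq
  smul_mem' c p hp := by
    calc ‖(c : ℝ) • p.2‖ = c * ‖p.2‖ := norm_smul_of_nonneg c.2 p.2
      _ ≤ c * p.1 := mul_le_mul_of_nonneg_left hp c.2

section RealizableCone

variable {E : Type*} [NormedAddCommGroup E] [NormedSpace ℝ E]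

theorem mem_realizableCone {p : ℝ × E} : p ∈ realizableCone E ↔ ‖p.2‖ ≤ p.1 :=
  Iff.rfl

theorem integral_smul_mem_realizableCone {X : Type*} [MeasurableSpace X] {μ : Measure X}
    {f : X → ℝ} {g : X → E} (hf : Integrable f μ) (hf_nonneg : ∀ᵐ x ∂μ, 0 ≤ f x)
    (hg : ∀ᵐ x ∂μ, ‖g x‖ ≤ 1) :
    (∫ x, f x ∂μ, ∫ x, f x • g x ∂μ) ∈ realizableCone E := by
  refine mem_realizableCone.2 (norm_integral_le_of_norm_le hf ?_)
  filter_upwards [hf_nonneg, hg] with x hfx hgx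
  calc ‖f x • g x‖ = f x * ‖g x‖ := norm_smul_of_nonneg hfx (g x)
    _ ≤ f x := mul_le_of_le_one_right hfx hgx

end RealizableCone

theorem one_sub_inner_nonneg {E : Type*} [NormedAddCommGroup E] [InnerProductSpace ℝ E]
    {x y : E} (hx : ‖x‖ ≤ 1) (hy : ‖y‖ ≤ 1) : 0 ≤ 1 - ⟪x, y⟫_ℝ :=
  sub_nonneg.2 ((real_inner_le_norm x y).trans (mul_le_one₀ hx (norm_nonneg y) hy))

section SphereMoments

variable (μ : Measure (Metric.sphere (0 : EuclideanSpace ℝ (Fin 3)) 1)) [IsFiniteMeasure μ]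

theorem mom_mem_realizableCone : mom μ ∈ realizableCone (EuclideanSpace ℝ (Fin 3)) := by
  have h := integral_smul_mem_realizableCone (integrable_const (μ := μ) (1 : ℝ))
    (ae_of_all μ fun _ ↦ zero_le_one) (ae_of_all μ fun Ω ↦ (norm_eq_of_mem_sphere Ω).le)
  simpa [mom, Measure.real] using h

theorem momMinus_mem_realizableCone {n : EuclideanSpace ℝ (Fin 3)} (hn : ‖n‖ ≤ 1) :
    momMinus n μ ∈ realizableCone (EuclideanSpace ℝ (Fin 3)) := by
  have density_continuous : Continuous fun Ω : Metric.sphere (0 : EuclideanSpace ℝ (Fin 3)) 1 ↦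
      1 - ⟪n, (Ω : EuclideanSpace ℝ (Fin 3))⟫_ℝ := by fun_prop
  have sphere_norm_le (Ω : Metric.sphere (0 : EuclideanSpace ℝ (Fin 3)) 1) :
      ‖(Ω : EuclideanSpace ℝ (Fin 3))‖ ≤ 1 := (norm_eq_of_mem_sphere Ω).le
  exact integral_smul_mem_realizableCone
    (density_continuous.integrable_of_hasCompactSupport (.of_compactSpace _))
    (ae_of_all μ fun Ω ↦ one_sub_inner_nonneg hn (sphere_norm_le Ω)) (ae_of_all μ sphere_norm_le)

end SphereMoments

/-- Here `c i` stands for `Δt lᵢ / (2|K|)` and `θ` for `(2/3) ŵ¹`, so that `c i ≤ θ` is the CFL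
condition; `ι`, `κ` and `τ` index the interior nodes, the edges and the nodes on an edge. -/
theorem dg_cell_average_realizable_general {ι κ τ : Type*} [Fintype ι] [Fintype κ] [Fintype τ]
    {wt : ι → ℝ} (hwt : ∀ γ, 0 ≤ wt γ) {w : τ → ℝ} (hw : ∀ β, 0 ≤ w β)
    {n : κ → EuclideanSpace ℝ (Fin 3)} (hn : ∀ i, ‖n i‖ ≤ 1)
    {θ : ℝ} {c : κ → ℝ} (hc : ∀ i, 0 ≤ c i) (hcfl : ∀ i, c i ≤ θ)
    (μin : ι → Measure (Metric.sphere (0 : EuclideanSpace ℝ (Fin 3)) 1))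
    [∀ γ, IsFiniteMeasure (μin γ)]
    (μ ν : κ → τ → Measure (Metric.sphere (0 : EuclideanSpace ℝ (Fin 3)) 1))
    [∀ i β, IsFiniteMeasure (μ i β)] [∀ i β, IsFiniteMeasure (ν i β)] :
    ∑ γ, wt γ • mom (μin γ) +
        ∑ i, ∑ β, w β • ((θ - c i) • mom (μ i β) + c i • momMinus (n i) (ν i β)) ∈
      realizableCone (EuclideanSpace ℝ (Fin 3)) := by
  have interior_mem (γ : ι) := PointedCone.smul_mem _ (hwt γ) (mom_mem_realizableCone (μin γ))
  have trace_mem (i : κ) (β : τ) :=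
    PointedCone.smul_mem _ (sub_nonneg.2 (hcfl i)) (mom_mem_realizableCone (μ i β))
  have flux_mem (i : κ) (β : τ) :=
    PointedCone.smul_mem _ (hc i) (momMinus_mem_realizableCone (ν i β) (hn i))
  exact add_mem (sum_mem fun γ _ ↦ interior_mem γ) <|
    sum_mem fun i _ ↦ sum_mem fun β _ ↦
      PointedCone.smul_mem _ (hw β) (add_mem (trace_mem i β) (flux_mem i β))

theorem gaussLegendre_three_weights_nonneg (β : Fin 3) :
    (0 : ℝ) ≤ ![5 / 18, 8 / 18, 5 / 18] β := by
  fin_cases β <;> norm_num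

/-- Algebraic core of the realizability-preservation theorem for one forward-Euler step of
the DG scheme with global Lax–Friedrichs flux on a triangle `K`: under the CFL condition
`(2/3)ŵ¹ − Δt lᵢ/(2|K|) ≥ 0` (with `ŵ¹ = 1/6`), the updated cell average
`Ū = Σ_γ w̃_γ m(μ_γ) + Σᵢ Σ_β w^β [((2/3)ŵ¹ − Δt lᵢ/(2|K|)) m(μ_{i,β})
      + (Δt lᵢ/(2|K|)) m⁻_{nᵢ}(ν_{i,β})]`
is realizable: its first component dominates the norm of its `ℝ³` component. -/
theorem dg_cell_average_realizable (L : ℕ) (wt : Fin L → ℝ) (hwt : ∀ γ, 0 ≤ wt γ)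
    (w : Fin 3 → ℝ) (hw : w = ![5/18, 8/18, 5/18])
    (n : Fin 3 → EuclideanSpace ℝ (Fin 3)) (hn : ∀ i, ‖n i‖ = 1)
    (l : Fin 3 → ℝ) (hl : ∀ i, 0 < l i)
    (K : ℝ) (hK : 0 < K) (Δt : ℝ) (hΔt : 0 < Δt)
    (hcfl : ∀ i, 0 ≤ (2/3 : ℝ) * (1/6) - Δt * l i / (2 * K))
    (μin : Fin L → Measure (Metric.sphere (0 : EuclideanSpace ℝ (Fin 3)) 1))
    [∀ γ, IsFiniteMeasure (μin γ)]
    (μ : Fin 3 → Fin 3 → Measure (Metric.sphere (0 : EuclideanSpace ℝ (Fin 3)) 1))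
    [∀ i β, IsFiniteMeasure (μ i β)]
    (ν : Fin 3 → Fin 3 → Measure (Metric.sphere (0 : EuclideanSpace ℝ (Fin 3)) 1))
    [∀ i β, IsFiniteMeasure (ν i β)] :
    ‖(∑ γ, wt γ • mom (μin γ) +
        ∑ i, ∑ β, w β •
          (((2/3 : ℝ) * (1/6) - Δt * l i / (2 * K)) • mom (μ i β) +
            (Δt * l i / (2 * K)) • momMinus (n i) (ν i β))).2‖ ≤
      (∑ γ, wt γ • mom (μin γ) +
        ∑ i, ∑ β, w β •
          (((2/3 : ℝ) * (1/6) - Δt * l i / (2 * K)) • mom (μ i β) +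
            (Δt * l i / (2 * K)) • momMinus (n i) (ν i β))).1 :=
  mem_realizableCone.1 <| dg_cell_average_realizable_general hwt
    (hw ▸ gaussLegendre_three_weights_nonneg) (fun i ↦ (hn i).le)
    (fun i ↦ div_nonneg (mul_nonneg hΔt.le (hl i).le) (by positivity))
    (fun i ↦ sub_nonneg.1 (hcfl i)) μin μ ν
end

section
/- Let μ be a finite nonnegative Borel measure on S², let σ_a ≥ 0, σ_s ≥ 0, Δt ≥ 0 with Δt(σ_a + σ_s) ≤ 1, and let λ be the uniform surface measure on S² with total mass 4π. Then ν = (1 − Δt(σ_a + σ_s))·μ + (Δt σ_s/(4π))·μ(S²)·λ is a finite nonnegative Borel measure whose zeroth moment is ν(S²) = (1 − Δt σ_a)·μ(S²) and whose first moment is ∫_{S²} Ω dν = (1 − Δt(σ_a + σ_s))·∫_{S²} Ω dμ; in particular the pair ((1 − Δt σ_a)·μ(S²), (1 − Δt(σ_a + σ_s))·∫_{S²} Ω dμ) is realizable. -/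
open MeasureTheory

/-!
The moments of any finite measure are realizable, since directions have norm at most one. It
therefore suffices that the collision step yields a finite measure with the stated moments: the
scattered part restores exactly the mass `Δt σ_s μ(S²)` lost to scattering, and it carries no first
moment.
-/

section CollisionStep

variable {X E : Type*} [MeasurableSpace X] [NormedAddCommGroup E]

/-- Realizability of a pair of a zeroth moment `p` and a first moment `q`: the pair can be the
moments of a nonnegative density over directions of norm at most one. -/
def IsRealizable (p : ℝ) (q : E) : Prop :=
  0 ≤ p ∧ ‖q‖ ≤ p

theorem isRealizable_measureReal_univ_integral [NormedSpace ℝ E] {μ : Measure X}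
    [IsFiniteMeasure μ] {f : X → E} (hf : ∀ᵐ x ∂μ, ‖f x‖ ≤ 1) :
    IsRealizable (μ.real Set.univ) (∫ x, f x ∂μ) :=
  ⟨measureReal_nonneg, by simpa only [one_mul] using norm_integral_le_of_norm_le_const hf⟩

/-- The forward-Euler step for absorption `σa` and scattering `σs` into the angular distribution
`lam`, acting on a measure `μ` in place of a density. The coefficients are truncated at `0` by
`ENNReal.ofReal`, and `lam` is normalised by its total mass (`4π` for the surface measure of
`S²`). -/
noncomputable def collisionStep (lam : Measure X) (σa σs Δt : ℝ) (μ : Measure X) : Measure X :=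
  ENNReal.ofReal (1 - Δt * (σa + σs)) • μ +
    (ENNReal.ofReal (Δt * σs / lam.real Set.univ) * μ Set.univ) • lam

theorem ofReal_mul_measure_univ_ne_top (c : ℝ) (μ : Measure X) [IsFiniteMeasure μ] :
    ENNReal.ofReal c * μ Set.univ ≠ ⊤ :=
  ENNReal.mul_ne_top ENNReal.ofReal_ne_top (measure_ne_top μ _)

variable {μ lam : Measure X} [IsFiniteMeasure μ] {σa σs Δt : ℝ}

theorem isFiniteMeasure_collisionStep [IsFiniteMeasure lam] :
    IsFiniteMeasure (collisionStep lam σa σs Δt μ) :=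
  have := μ.smul_finite (c := ENNReal.ofReal (1 - Δt * (σa + σs))) ENNReal.ofReal_ne_top
  have := lam.smul_finite (ofReal_mul_measure_univ_ne_top (Δt * σs / lam.real Set.univ) μ)
  inferInstanceAs (IsFiniteMeasure (_ + _))

theorem collisionStep_real_univ [IsFiniteMeasure lam] [NeZero lam] (hscat : 0 ≤ Δt * σs)
    (hcfl : Δt * (σa + σs) ≤ 1) :
    (collisionStep lam σa σs Δt μ).real Set.univ = (1 - Δt * σa) * μ.real Set.univ := by
  have := μ.smul_finite (c := ENNReal.ofReal (1 - Δt * (σa + σs))) ENNReal.ofReal_ne_top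
  have := lam.smul_finite (ofReal_mul_measure_univ_ne_top (Δt * σs / lam.real Set.univ) μ)
  have scattered_mass : Δt * σs / lam.real Set.univ * μ.real Set.univ * lam.real Set.univ =
      Δt * σs * μ.real Set.univ := by
    have : lam.real Set.univ ≠ 0 := measureReal_univ_ne_zero
    field_simp
  calc (collisionStep lam σa σs Δt μ).real Set.univ
    _ = (1 - Δt * (σa + σs)) * μ.real Set.univ +
          Δt * σs / lam.real Set.univ * μ.real Set.univ * lam.real Set.univ := by
      rw [collisionStep, measureReal_add_apply, measureReal_ennreal_smul_apply,
        measureReal_ennreal_smul_apply, ENNReal.toReal_mul,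
        ENNReal.toReal_ofReal (sub_nonneg.2 hcfl), ENNReal.toReal_ofReal (by positivity),
        measureReal_def μ]
    _ = (1 - Δt * σa) * μ.real Set.univ := by rw [scattered_mass]; ring

variable [NormedSpace ℝ E] {f : X → E}

theorem integral_collisionStep (hfμ : Integrable f μ) (hflam : Integrable f lam)
    (hlam_first : ∫ x, f x ∂lam = 0) (hcfl : Δt * (σa + σs) ≤ 1) :
    ∫ x, f x ∂collisionStep lam σa σs Δt μ = (1 - Δt * (σa + σs)) • ∫ x, f x ∂μ := by
  rw [collisionStep, integral_add_measure (hfμ.smul_measure ENNReal.ofReal_ne_top)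
      (hflam.smul_measure (ofReal_mul_measure_univ_ne_top _ μ)),
    integral_smul_measure, integral_smul_measure, hlam_first, smul_zero, add_zero,
    ENNReal.toReal_ofReal (sub_nonneg.2 hcfl)]

theorem collision_step_realizable_general [CompleteSpace E] [IsFiniteMeasure lam] [NeZero lam]
    (hf : StronglyMeasurable f) (hf_le : ∀ x, ‖f x‖ ≤ 1) (hlam_first : ∫ x, f x ∂lam = 0)
    (hscat : 0 ≤ Δt * σs) (hcfl : Δt * (σa + σs) ≤ 1) :
    IsFiniteMeasure (collisionStep lam σa σs Δt μ) ∧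
    (collisionStep lam σa σs Δt μ).real Set.univ = (1 - Δt * σa) * μ.real Set.univ ∧
    ∫ x, f x ∂collisionStep lam σa σs Δt μ = (1 - Δt * (σa + σs)) • ∫ x, f x ∂μ ∧
    IsRealizable ((1 - Δt * σa) * μ.real Set.univ)
      ((1 - Δt * (σa + σs)) • ∫ x, f x ∂μ) := by
  have integrable_f (κ : Measure X) [IsFiniteMeasure κ] : Integrable f κ :=
    .of_bound hf.aestronglyMeasurable 1 (.of_forall hf_le)
  have finite : IsFiniteMeasure (collisionStep lam σa σs Δt μ) := isFiniteMeasure_collisionStep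
  have zeroth_moment := collisionStep_real_univ (μ := μ) (lam := lam) hscat hcfl
  have first_moment := integral_collisionStep (integrable_f μ) (integrable_f lam) hlam_first hcfl
  refine ⟨finite, zeroth_moment, first_moment, ?_⟩
  rw [← zeroth_moment, ← first_moment]
  exact isRealizable_measureReal_univ_integral (.of_forall hf_le)

end CollisionStep

/-- Forward-Euler collision step: if `λ` is the uniform surface measure on `S²` with total
mass `4π` and vanishing first moment, `σ_a, σ_s, Δt ≥ 0` with `Δt(σ_a + σ_s) ≤ 1`, then
`ν = (1 − Δt(σ_a + σ_s))·μ + (Δt σ_s/(4π))·μ(S²)·λ` is a finite nonnegative measure with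
zeroth moment `(1 − Δt σ_a)·μ(S²)` and first moment `(1 − Δt(σ_a + σ_s))·∫ Ω dμ`;
in particular that moment pair is realizable. -/
theorem collision_step_realizable
    (μ lam : Measure (Metric.sphere (0 : EuclideanSpace ℝ (Fin 3)) 1))
    [IsFiniteMeasure μ] [IsFiniteMeasure lam]
    (hlam_mass : lam Set.univ = ENNReal.ofReal (4 * Real.pi))
    (hlam_first : (∫ Ω, (Ω : EuclideanSpace ℝ (Fin 3)) ∂lam) = 0)
    (σa σs Δt : ℝ) (ha : 0 ≤ σa) (hs : 0 ≤ σs) (ht : 0 ≤ Δt)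
    (hcfl : Δt * (σa + σs) ≤ 1)
    (ν : Measure (Metric.sphere (0 : EuclideanSpace ℝ (Fin 3)) 1))
    (hν : ν = ENNReal.ofReal (1 - Δt * (σa + σs)) • μ +
      (ENNReal.ofReal (Δt * σs / (4 * Real.pi)) * μ Set.univ) • lam) :
    IsFiniteMeasure ν ∧
    (ν Set.univ).toReal = (1 - Δt * σa) * (μ Set.univ).toReal ∧
    (∫ Ω, (Ω : EuclideanSpace ℝ (Fin 3)) ∂ν) =
      (1 - Δt * (σa + σs)) • ∫ Ω, (Ω : EuclideanSpace ℝ (Fin 3)) ∂μ ∧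
    0 ≤ (1 - Δt * σa) * (μ Set.univ).toReal ∧
    ‖(1 - Δt * (σa + σs)) • ∫ Ω, (Ω : EuclideanSpace ℝ (Fin 3)) ∂μ‖ ≤
      (1 - Δt * σa) * (μ Set.univ).toReal := by
  have hmass : lam.real Set.univ = 4 * Real.pi := by
    rw [measureReal_def, hlam_mass, ENNReal.toReal_ofReal (by positivity)]
  have : NeZero lam := ⟨by rintro rfl; simp [Real.pi_ne_zero] at hmass⟩
  rw [hν, ← hmass]
  exact collision_step_realizable_general continuous_subtype_val.stronglyMeasurable
    (fun Ω ↦ (norm_eq_of_mem_sphere Ω).le) hlam_first (mul_nonneg ht hs) hcfl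
end
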